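/- arXiv:1503.09014 — 2 statements merged into one kernel-verified Lean document; each statement's English description precedes it below -/
import Mathlib

section
/- Let X ⊆ ℝⁿ be a closed convex set containing no line, let E be the set of its extreme points and D the set of its extreme (recession) directions. Then X = conv(E) + coni(D), i.e., every x ∈ X is the sum of a convex combination of extreme points and a nonnegative combination of extreme directions, and conversely. -/
open Pointwise

/-- A nonzero vector `d` is a recession direction of `S` if `x + θ • d ∈ S`
for all `x ∈ S` and `θ ≥ 0`. -/
def IsRecessionDirection {E : Type*} [AddCommGroup E] [Module ℝ E] (S : Set E) (d : E) : Prop :=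
  d ≠ 0 ∧ ∀ x ∈ S, ∀ θ : ℝ, 0 ≤ θ → x + θ • d ∈ S

/-- A recession direction `d` of `S` is extreme if whenever `d = l₁ • d₁ + l₂ • d₂`
with `l₁, l₂ > 0` and `d₁, d₂` recession directions, `d₁` is a positive multiple of `d₂`. -/
def IsExtremeDirection {E : Type*} [AddCommGroup E] [Module ℝ E] (S : Set E) (d : E) : Prop :=
  IsRecessionDirection S d ∧
    ∀ d₁ d₂ : E, IsRecessionDirection S d₁ → IsRecessionDirection S d₂ →
      ∀ l₁ l₂ : ℝ, 0 < l₁ → 0 < l₂ → d = l₁ • d₁ + l₂ • d₂ →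
        ∃ α : ℝ, 0 < α ∧ d₁ = α • d₂

/-- The conical hull of `D`: all finite nonnegative combinations of elements of `D`
(including `0`). -/
def ConicalHull {E : Type*} [AddCommGroup E] [Module ℝ E] (D : Set E) : Set E :=
  {z : E | ∃ (k : ℕ) (c : Fin k → ℝ) (v : Fin k → E),
    (∀ i, 0 ≤ c i) ∧ (∀ i, v i ∈ D) ∧ z = ∑ i, c i • v i}

/-!
The induction is on the subspace of directions in which one can move both ways from `x` inside
`X`. If it contains a direction `d` such that neither `d` nor `-d` is a recession direction, then
`x` lies strictly between the last points of `X` on the two rays from `x` along `±d`, and these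
subspaces are strictly smaller at both endpoints. Otherwise the subspace is covered by the
recession cone and its negative, so it is at most a line because the recession cone is closed and
contains no line. If it is zero, `x` is extreme. If it is spanned by a recession direction `d`,
then `d` is extreme, and moving from `x` along `-d` until one leaves `X` ends at a point with a
strictly smaller subspace.
-/

section Algebra

variable {E : Type*} [AddCommGroup E] [Module ℝ E] {S : Set E} {C : PointedCone ℝ E} {x y d : E}

theorem conicalHull_eq_hull (D : Set E) : ConicalHull D = PointedCone.hull ℝ D := by
  ext z
  rw [SetLike.mem_coe, Submodule.mem_span_set']
  constructor
  · rintro ⟨k, c, v, hc, hv, rfl⟩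
    exact ⟨k, fun i => ⟨c i, hc i⟩, fun i => ⟨v i, hv i⟩, rfl⟩
  · rintro ⟨k, c, v, rfl⟩
    exact ⟨k, fun i => c i, fun i => v i, fun i => (c i).2, fun i => (v i).2, rfl⟩

theorem exists_pos_smul_eq_of_lineal_eq_bot {e : E} (hC : C.lineal = ⊥) (hd : d ∈ C) (he : e ∈ C)
    (he0 : e ≠ 0) (hspan : e ∈ Submodule.span ℝ {d}) : ∃ c : ℝ, 0 < c ∧ c • d = e := by
  obtain ⟨c, rfl⟩ := Submodule.mem_span_singleton.1 hspan
  refine ⟨c, ?_, rfl⟩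
  by_contra! hc
  have hneg : -(c • d) ∈ C := by
    rw [← neg_smul]
    exact C.smul_mem (neg_nonneg.2 hc) hd
  have hlineal : c • d ∈ C.lineal := ⟨he, hneg⟩
  rw [hC, Submodule.mem_bot] at hlineal
  exact he0 hlineal

theorem mem_add_of_sub_mem_add {A : Set E} (hx : x - d ∈ A + (C : Set E)) (hd : d ∈ C) :
    x ∈ A + (C : Set E) := by
  obtain ⟨p, hp, q, hq, hpq⟩ := hx
  exact ⟨p, hp, q + d, add_mem hq hd, (add_assoc p q d).symm.trans (eq_sub_iff_add_eq.1 hpq)⟩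

theorem mem_of_add_smul_mem_of_sub_smul_mem (hS : Convex ℝ S) {s t : ℝ} (hs : 0 < s) (ht : 0 < t)
    (hadd : x + s • d ∈ S) (hsub : x - t • d ∈ S) : x ∈ S := by
  have hcomb := hS hadd hsub (a := t / (s + t)) (b := s / (s + t)) (by positivity) (by positivity)
    (by field_simp; ring)
  convert hcomb using 1
  match_scalars <;> field_simp <;> ring

/-- The recession cone of `S`: the recession directions of `S` together with `0`. -/
def recessionCone (S : Set E) : PointedCone ℝ E where
  carrier := {d | ∀ x ∈ S, ∀ θ : ℝ, 0 ≤ θ → x + θ • d ∈ S}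
  zero_mem' x hx θ _ := by simpa using hx
  add_mem' hd he x hx θ hθ := by
    rw [smul_add, ← add_assoc]
    exact he _ (hd x hx θ hθ) θ hθ
  smul_mem' c d hd x hx θ hθ := by
    have h := hd x hx (θ * c) (mul_nonneg hθ c.2)
    rwa [mul_smul] at h

theorem isRecessionDirection_iff : IsRecessionDirection S d ↔ d ≠ 0 ∧ d ∈ recessionCone S :=
  Iff.rfl

theorem add_mem_of_mem_recessionCone (hx : x ∈ S) (hd : d ∈ recessionCone S) : x + d ∈ S := by
  simpa using hd x hx 1 zero_le_one

theorem hull_isExtremeDirection_le_recessionCone :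
    PointedCone.hull ℝ {d | IsExtremeDirection S d} ≤ recessionCone S :=
  Submodule.span_le.2 fun _ hd => (isRecessionDirection_iff.1 hd.1).2

theorem lineal_recessionCone_eq_bot (hS : S.Nonempty)
    (hline : ¬ ∃ x ∈ S, ∃ d : E, d ≠ 0 ∧ ∀ t : ℝ, x + t • d ∈ S) :
    (recessionCone S).lineal = ⊥ := by
  rw [Submodule.eq_bot_iff]
  rintro d ⟨hd, hnegd⟩
  by_contra hd0
  obtain ⟨x, hx⟩ := hS
  refine hline ⟨x, hx, d, hd0, fun t => ?_⟩
  rcases le_total 0 t with ht | ht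
  · exact hd x hx t ht
  · simpa using hnegd x hx (-t) (neg_nonneg.2 ht)

/-- The radial cone of `S` at `x`, generated by the vectors leading from `x` to points of `S`. -/
def radialCone (S : Set E) (x : E) : PointedCone ℝ E :=
  PointedCone.hull ℝ ((fun d => x + d) ⁻¹' S)

theorem sub_mem_radialCone (hy : y ∈ S) : y - x ∈ radialCone S x :=
  PointedCone.subset_hull (by simpa using hy)

theorem mem_radialCone_iff (hS : Convex ℝ S) (hx : x ∈ S) :
    d ∈ radialCone S x ↔ ∃ ε : ℝ, 0 < ε ∧ x + ε • d ∈ S := by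
  have hT : Convex ℝ ((fun d => x + d) ⁻¹' S) := hS.translate_preimage_right x
  have hpointed : (ConvexCone.hull ℝ ((fun d => x + d) ⁻¹' S)).Pointed :=
    ConvexCone.subset_hull (by simpa using hx)
  constructor
  · intro hd
    have hle : radialCone S x ≤ (ConvexCone.hull ℝ _).toPointedCone hpointed :=
      Submodule.span_le.2 ConvexCone.subset_hull
    obtain ⟨r, hr, hmem⟩ := (ConvexCone.mem_hull_of_convex hT).1 (hle hd)
    exact ⟨r⁻¹, inv_pos.2 hr, (Set.mem_smul_set_iff_inv_smul_mem₀ hr.ne' _ _).1 hmem⟩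
  · rintro ⟨ε, hε, hmem⟩
    exact (PointedCone.smul_mem_iff _ hε).1 (PointedCone.subset_hull hmem)

theorem recessionCone_le_radialCone (hx : x ∈ S) : recessionCone S ≤ radialCone S x :=
  fun _ hd => PointedCone.subset_hull (add_mem_of_mem_recessionCone hx hd)

theorem radialCone_le_radialCone (h : y - x ∈ (radialCone S x).lineal) :
    radialCone S y ≤ radialCone S x := by
  refine Submodule.span_le.2 fun d hd => ?_
  have hsub : (y + d - x) + -(y - x) ∈ radialCone S x := add_mem (sub_mem_radialCone hd) h.2
  rwa [show y + d - x + -(y - x) = d by abel] at hsub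

/-- The lineality space of the radial cone of `S` at `x`. For convex `S` and `x ∈ S` it consists of
the directions in which one can move both ways from `x` inside `S`, and it is the direction of the
affine span of the smallest face of `S` containing `x`. -/
noncomputable def faceDirection (S : Set E) (x : E) : Submodule ℝ E :=
  (radialCone S x).lineal

theorem faceDirection_add_smul_lt (hd : d ∈ faceDirection S x) {t : ℝ}
    (hlast : d ∉ radialCone S (x + t • d)) : faceDirection S (x + t • d) < faceDirection S x := by
  have hle : radialCone S (x + t • d) ≤ radialCone S x :=
    radialCone_le_radialCone (by
      rw [add_sub_cancel_left]
      exact (faceDirection S x).smul_mem t hd)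
  exact lt_of_le_of_ne (PointedCone.gc_ofSubmodule_lineal.monotone_u hle)
    fun heq => hlast (heq.ge hd).1

theorem mem_extremePoints_of_faceDirection_eq_bot (hx : x ∈ S) (h : faceDirection S x = ⊥) :
    x ∈ S.extremePoints ℝ := by
  have eq_of_mem_openSegment : ∀ y ∈ S, ∀ z ∈ S, x ∈ openSegment ℝ y z → y = x := by
    rintro y hy z hz ⟨a, b, ha, hb, hab, hxyz⟩
    have hzero : a • (y - x) + b • (z - x) = 0 := by
      rw [smul_sub, smul_sub, sub_add_sub_comm, hxyz, ← add_smul, hab, one_smul, sub_self]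
    have hyx : y - x ∈ faceDirection S x :=
      (PointedCone.IsFaceOf.lineal _).mem_of_smul_add_smul_mem_left (sub_mem_radialCone hy)
        (sub_mem_radialCone hz) ha hb (hzero ▸ zero_mem _)
    rw [h, Submodule.mem_bot] at hyx
    exact sub_eq_zero.1 hyx
  refine mem_extremePoints.2 ⟨hx, fun y hy z hz hxyz => ⟨eq_of_mem_openSegment y hy z hz hxyz, ?_⟩⟩
  exact eq_of_mem_openSegment z hz y hy (openSegment_symm ℝ y z ▸ hxyz)

theorem isExtremeDirection_of_faceDirection_eq_span (hx : x ∈ S)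
    (hsalient : (recessionCone S).lineal = ⊥) (hd : IsRecessionDirection S d)
    (hspan : faceDirection S x = Submodule.span ℝ {d}) : IsExtremeDirection S d := by
  refine ⟨hd, fun d₁ d₂ h₁ h₂ l₁ l₂ hl₁ hl₂ hsum => ?_⟩
  have hface : l₁ • d₁ + l₂ • d₂ ∈ faceDirection S x := by
    rw [← hsum, hspan]
    exact Submodule.mem_span_singleton_self d
  have hd₁ : d₁ ∈ radialCone S x := recessionCone_le_radialCone hx h₁.2
  have hd₂ : d₂ ∈ radialCone S x := recessionCone_le_radialCone hx h₂.2
  have hlineal := PointedCone.IsFaceOf.lineal (radialCone S x)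
  have hspan₁ : d₁ ∈ Submodule.span ℝ {d} :=
    hspan.le (hlineal.mem_of_smul_add_smul_mem_left hd₁ hd₂ hl₁ hl₂ hface)
  have hspan₂ : d₂ ∈ Submodule.span ℝ {d} :=
    hspan.le (hlineal.mem_of_smul_add_smul_mem_right hd₁ hd₂ hl₁ hl₂ hface)
  obtain ⟨c₁, hc₁, rfl⟩ := exists_pos_smul_eq_of_lineal_eq_bot hsalient hd.2 h₁.2 h₁.1 hspan₁
  obtain ⟨c₂, hc₂, rfl⟩ := exists_pos_smul_eq_of_lineal_eq_bot hsalient hd.2 h₂.2 h₂.1 hspan₂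
  exact ⟨c₁ / c₂, by positivity, by rw [smul_smul, div_mul_cancel₀ _ hc₂.ne']⟩

end Algebra

section Topology

variable {E : Type*} [AddCommGroup E] [Module ℝ E] [TopologicalSpace E]
  [IsTopologicalAddGroup E] [ContinuousSMul ℝ E] {S : Set E} {C : PointedCone ℝ E} {x d : E}

theorem isPrincipal_of_forall_mem_or_neg_mem (hCc : IsClosed (C : Set E)) (hC : C.lineal = ⊥)
    {V : Submodule ℝ E} (hV : ∀ v ∈ V, v ∈ C ∨ -v ∈ C) : V.IsPrincipal := by
  rw [← Submodule.rank_le_one_iff_isPrincipal]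
  by_contra! hrank
  -- `V \ {0}` is connected, yet the closed sets `C` and `-C` cover it and meet only at `0`.
  have hconn := (isConnected_compl_singleton_of_one_lt_rank hrank 0).isPreconnected
  have hex : ∃ w : V, w ≠ 0 ∧ (w : E) ∈ C := by
    have : Nontrivial V := rank_pos_iff_nontrivial.1 (zero_lt_one.trans hrank)
    obtain ⟨v, hv⟩ := exists_ne (0 : V)
    rcases hV v v.2 with h | h
    · exact ⟨v, hv, h⟩
    · exact ⟨-v, neg_ne_zero.2 hv, h⟩
  obtain ⟨w, hw, hwC⟩ := hex
  obtain ⟨u, hu, huC, hnegC⟩ := isPreconnected_closed_iff.1 hconn {v : V | (v : E) ∈ C}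
    {v : V | -(v : E) ∈ C} (hCc.preimage (by fun_prop)) (hCc.preimage (by fun_prop))
    (fun v _ => hV v v.2) ⟨w, hw, hwC⟩ ⟨-w, neg_ne_zero.2 hw, by simpa using hwC⟩
  have hlineal : (u : E) ∈ C.lineal := ⟨huC, hnegC⟩
  rw [hC, Submodule.mem_bot] at hlineal
  exact hu (Subtype.ext hlineal)

theorem exists_mem_eq_span_singleton (hCc : IsClosed (C : Set E)) (hC : C.lineal = ⊥)
    {V : Submodule ℝ E} (hV : ∀ v ∈ V, v ∈ C ∨ -v ∈ C) :
    ∃ d ∈ C, V = Submodule.span ℝ {d} := by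
  obtain ⟨d, hspan⟩ := isPrincipal_of_forall_mem_or_neg_mem hCc hC hV
  rcases hV d (hspan ▸ Submodule.mem_span_singleton_self d) with hd | hd
  · exact ⟨d, hd, hspan⟩
  · exact ⟨-d, hd, hspan.trans (by rw [← Set.neg_singleton, Submodule.span_neg])⟩

theorem isClosed_recessionCone (hSc : IsClosed S) : IsClosed (recessionCone S : Set E) := by
  change IsClosed {d : E | ∀ x ∈ S, ∀ θ : ℝ, 0 ≤ θ → x + θ • d ∈ S}
  simp only [Set.ofPred_forall]
  exact isClosed_iInter fun x => isClosed_iInter fun _ => isClosed_iInter fun θ =>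
    isClosed_iInter fun _ => hSc.preimage (f := fun d : E => x + θ • d) (by fun_prop)

theorem mem_recessionCone_of_ray_subset (hSc : IsClosed S) (hS : Convex ℝ S)
    (hray : ∀ t : ℝ, 0 ≤ t → x + t • d ∈ S) : d ∈ recessionCone S := by
  have hd : d ∈ asymptoticCone ℝ S := by
    have htendsto := (Filter.tendsto_id (α := ℝ)).atTop_smul_const_tendsto_asymptoticNhds d
      |>.asymptoticNhds_vadd_const x
    refine htendsto.frequently (Filter.Eventually.frequently ?_)
    filter_upwards [Filter.eventually_ge_atTop 0] with t ht
    simpa [add_comm] using hray t ht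
  intro z hz θ hθ
  simpa [add_comm] using hS.smul_vadd_mem_of_isClosed_of_mem_asymptoticCone hSc hθ hd hz

theorem exists_add_smul_mem_notMem_radialCone (hSc : IsClosed S) (hS : Convex ℝ S) (hx : x ∈ S)
    (hd : d ∈ radialCone S x) (hrec : d ∉ recessionCone S) :
    ∃ t : ℝ, 0 < t ∧ x + t • d ∈ S ∧ d ∉ radialCone S (x + t • d) := by
  set T : Set ℝ := {t | x + t • d ∈ S}
  have hbdd : BddAbove T := by
    by_contra hunbdd
    refine hrec (mem_recessionCone_of_ray_subset hSc hS (x := x) fun r hr => ?_)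
    obtain ⟨t, ht, hrt⟩ := not_bddAbove_iff.1 hunbdd r
    have ht0 : 0 < t := hr.trans_lt hrt
    have hmem := hS.add_smul_mem hx ht (t := r / t) ⟨by positivity, (div_le_one ht0).2 hrt.le⟩
    rwa [smul_smul, div_mul_cancel₀ _ ht0.ne'] at hmem
  have hclosed : IsClosed T := hSc.preimage (f := fun t : ℝ => x + t • d) (by fun_prop)
  obtain ⟨ε, hε, hεT⟩ := (mem_radialCone_iff hS hx).1 hd
  have hsup : x + sSup T • d ∈ S := hclosed.csSup_mem ⟨ε, hεT⟩ hbdd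
  refine ⟨sSup T, hε.trans_le (le_csSup hbdd hεT), hsup, fun hlast => ?_⟩
  obtain ⟨δ, hδ, hδS⟩ := (mem_radialCone_iff hS hsup).1 hlast
  rw [add_assoc, ← add_smul] at hδS
  linarith [le_csSup hbdd hδS]

theorem subset_convexHull_extremePoints_add_hull [FiniteDimensional ℝ E] (hSc : IsClosed S)
    (hS : Convex ℝ S) (hsalient : (recessionCone S).lineal = ⊥) :
    S ⊆ convexHull ℝ (S.extremePoints ℝ) +
      (PointedCone.hull ℝ {d | IsExtremeDirection S d} : Set E) := by
  intro x hx
  set K := PointedCone.hull ℝ {d | IsExtremeDirection S d}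
  induction hV : faceDirection S x using WellFoundedLT.induction generalizing x with
  | ind V ih =>
  subst hV
  have hforward : ∀ d ∈ faceDirection S x, d ∉ recessionCone S →
      ∃ t : ℝ, 0 < t ∧ x + t • d ∈ convexHull ℝ (S.extremePoints ℝ) + (K : Set E) := by
    intro d hd hrec
    obtain ⟨t, ht, hy, hlast⟩ := exists_add_smul_mem_notMem_radialCone hSc hS hx hd.1 hrec
    exact ⟨t, ht, ih _ (faceDirection_add_smul_lt hd hlast) hy rfl⟩
  have hbackward : ∀ d ∈ faceDirection S x, -d ∉ recessionCone S →
      ∃ t : ℝ, 0 < t ∧ x - t • d ∈ convexHull ℝ (S.extremePoints ℝ) + (K : Set E) := by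
    intro d hd hrec
    simpa [sub_eq_add_neg] using hforward (-d) (neg_mem hd) hrec
  by_cases hcover : ∀ d ∈ faceDirection S x, d ∈ recessionCone S ∨ -d ∈ recessionCone S
  · obtain ⟨d, hd, hspan⟩ :=
      exists_mem_eq_span_singleton (isClosed_recessionCone hSc) hsalient hcover
    rcases eq_or_ne d 0 with rfl | hd0
    · have hext := mem_extremePoints_of_faceDirection_eq_bot hx (by simpa using hspan)
      exact ⟨x, subset_convexHull ℝ _ hext, 0, zero_mem K, add_zero x⟩
    have hdK : d ∈ K := PointedCone.subset_hull
      (isExtremeDirection_of_faceDirection_eq_span hx hsalient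
        (isRecessionDirection_iff.2 ⟨hd0, hd⟩) hspan)
    have hnegd : -d ∉ recessionCone S := fun h =>
      hd0 ((Submodule.eq_bot_iff _).1 hsalient d ⟨hd, h⟩)
    obtain ⟨t, ht, hsub⟩ := hbackward d (hspan ▸ Submodule.mem_span_singleton_self d) hnegd
    exact mem_add_of_sub_mem_add hsub (K.smul_mem ht.le hdK)
  · push Not at hcover
    obtain ⟨d, hd, hrec, hnegrec⟩ := hcover
    obtain ⟨s, hs, hadd⟩ := hforward d hd hrec
    obtain ⟨t, ht, hsub⟩ := hbackward d hd hnegrec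
    exact mem_of_add_smul_mem_of_sub_smul_mem ((convex_convexHull ℝ _).add K.convex) hs ht hadd hsub

theorem representation_theorem_general [FiniteDimensional ℝ E] (hSc : IsClosed S)
    (hS : Convex ℝ S) (hline : ¬ ∃ x ∈ S, ∃ d : E, d ≠ 0 ∧ ∀ t : ℝ, x + t • d ∈ S) :
    S = convexHull ℝ (S.extremePoints ℝ) + ConicalHull {d | IsExtremeDirection S d} := by
  rcases S.eq_empty_or_nonempty with rfl | hne
  · simp
  rw [conicalHull_eq_hull]
  refine (subset_convexHull_extremePoints_add_hull hSc hS
    (lineal_recessionCone_eq_bot hne hline)).antisymm ?_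
  rintro _ ⟨p, hp, q, hq, rfl⟩
  exact add_mem_of_mem_recessionCone (convexHull_min extremePoints_subset hS hp)
    (hull_isExtremeDirection_le_recessionCone hq)

end Topology

/-- Representation theorem: a nonempty closed convex set `X ⊆ ℝⁿ` containing no line is
the Minkowski sum of the convex hull of its extreme points and the conical hull of its
extreme recession directions. -/
theorem representation_theorem (n : ℕ) (X : Set (Fin n → ℝ))
    (hne : X.Nonempty) (hXc : IsClosed X) (hX : Convex ℝ X)
    (hline : ¬ ∃ x ∈ X, ∃ d : Fin n → ℝ, d ≠ 0 ∧ ∀ t : ℝ, x + t • d ∈ X) :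
    X = convexHull ℝ (Set.extremePoints ℝ X) +
        ConicalHull {d : Fin n → ℝ | IsExtremeDirection X d} :=
  representation_theorem_general hXc hX hline
end

section
/- Goldman–Tucker theorem: if the primal max{cᵀx : Ax ≤ b, x ≥ 0} and dual min{bᵀy : Aᵀy ≥ c, y ≥ 0} both have optimal solutions, then there exist optimal solutions x*, y* with slacks u* = b − Ax* and v* = Aᵀy* − c such that x* + v* > 0 and y* + u* > 0 componentwise. -/
open Matrix

/-!
The optimality conditions `Ax ≤ tb`, `Aᵀy ≥ tc`, `bᵀy ≤ cᵀx` of the homogenized pair of programs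
read `z ≥ 0`, `Kz ≥ 0` for a skew-symmetric matrix `K` acting on `z = (y, x, t)`. Tucker's theorem
provides a solution with `z + Kz > 0`: by Farkas' lemma, either some solution has `zᵢ > 0`, or there
is a certificate `w ≥ 0` with `Kᵀw ≤ -eᵢ`, and `Kᵀ = -K` turns `w` into a solution with `(Kw)ᵢ > 0`;
adding one such solution for each `i` gives `z`. For `t = 0`, weak duality against feasible points
forces `cᵀx ≤ bᵀy`, contradicting `t + (cᵀx - bᵀy) > 0`; hence `t > 0`, and scaling to `t = 1` gives
the required optimal pair.
-/

section Farkas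

theorem mem_hull_insert_of_dualMap_transvection {R V : Type*} [CommRing R] [PartialOrder R]
    [IsOrderedRing R] [AddCommGroup V] [Module R V] {s : Set (Module.Dual R V)}
    {ψ g : Module.Dual R V} {w : V} (hs : ∀ φ ∈ s, 0 ≤ φ w) (hg : g w ≤ 0)
    (h : (LinearMap.transvection ψ w).dualMap g ∈
      PointedCone.hull R ((LinearMap.transvection ψ w).dualMap '' s)) :
    g ∈ PointedCone.hull R (insert ψ s) := by
  obtain ⟨φ, hφ, hφg⟩ : ∃ φ ∈ PointedCone.hull R s,
      (LinearMap.transvection ψ w).dualMap φ = (LinearMap.transvection ψ w).dualMap g := by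
    rwa [PointedCone.hull, ← LinearMap.coe_restrictScalars {r : R // 0 ≤ r},
      Submodule.span_image, Submodule.mem_map] at h
  have hφw : 0 ≤ φ w := by
    have hle : PointedCone.hull R s ≤ PointedCone.dual (Module.Dual.eval R V) {w} :=
      Submodule.span_le.2 fun φ hφ => by simpa using hs φ hφ
    simpa using hle hφ
  refine Submodule.mem_span_insert.2 ⟨⟨φ w - g w, sub_nonneg.2 (hg.trans hφw)⟩, φ, hφ, ?_⟩
  ext v
  have hv := LinearMap.congr_fun hφg v
  simp only [LinearMap.dualMap_apply, LinearMap.transvection.apply, map_add, map_smul,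
    smul_eq_mul] at hv
  simp only [Nonneg.mk_smul, LinearMap.add_apply, LinearMap.smul_apply, smul_eq_mul]
  linear_combination -hv

theorem mem_hull_image_of_forall_nonneg {R V ι : Type*} [Field R] [LinearOrder R]
    [IsStrictOrderedRing R] [AddCommGroup V] [Module R V] (s : Finset ι)
    (f : ι → Module.Dual R V) (g : Module.Dual R V)
    (h : ∀ v, (∀ i ∈ s, 0 ≤ f i v) → 0 ≤ g v) : g ∈ PointedCone.hull R (f '' s) := by
  classical
  induction s using Finset.induction_on generalizing f g with
  | empty =>
    have hg : g = 0 := by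
      ext v
      have hneg : 0 ≤ g (-v) := h (-v) (by simp)
      exact le_antisymm (by simpa using hneg) (h v (by simp))
    simp [hg]
  | insert k s _ ih =>
    rw [Finset.coe_insert, Set.image_insert_eq]
    by_cases hs : ∀ v, (∀ i ∈ s, 0 ≤ f i v) → 0 ≤ g v
    · exact Submodule.span_mono (Set.subset_insert _ _) (ih f g hs)
    obtain ⟨w, hw, hgw, hkw⟩ : ∃ w, (∀ i ∈ s, 0 ≤ f i w) ∧ g w < 0 ∧ f k w = -1 := by
      push Not at hs
      obtain ⟨w, hw, hgw⟩ := hs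
      have hkw : f k w < 0 := by
        by_contra! hkw
        exact hgw.not_ge (h w (by simpa [hkw] using hw))
      have hinv : 0 < (-f k w)⁻¹ := inv_pos.2 (neg_pos.2 hkw)
      refine ⟨(-f k w)⁻¹ • w, fun i hi => ?_, ?_, ?_⟩
      · rw [map_smul]
        exact smul_nonneg hinv.le (hw i hi)
      · rw [map_smul]
        exact smul_neg_of_pos_of_neg hinv hgw
      · rw [map_smul, smul_eq_mul, inv_neg, neg_mul, inv_mul_cancel₀ hkw.ne]
    -- As `f k w = -1`, the transvection `v ↦ v + f k v • w` is a projection onto `ker (f k)`.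
    refine mem_hull_insert_of_dualMap_transvection (Set.forall_mem_image.2 hw) hgw.le ?_
    rw [← Set.image_comp]
    refine ih _ _ fun v hv => h _ <| (Finset.forall_mem_insert _ _ _).2 ⟨?_, hv⟩
    simp [LinearMap.transvection.apply, hkw]

theorem exists_transpose_mulVec_le_of_forall_dotProduct_nonneg {R m n : Type*} [Field R]
    [LinearOrder R] [IsStrictOrderedRing R] [Fintype m] [Fintype n] (A : Matrix m n R)
    (c : n → R) (h : ∀ x, 0 ≤ x → 0 ≤ A *ᵥ x → 0 ≤ c ⬝ᵥ x) :
    ∃ y, 0 ≤ y ∧ Aᵀ *ᵥ y ≤ c := by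
  classical
  let f : m ⊕ n → Module.Dual R (n → R) :=
    Sum.elim (fun i => dotProductBilin R R (A i)) LinearMap.proj
  have hc : dotProductBilin R R c ∈ PointedCone.hull R (f '' (Finset.univ : Finset (m ⊕ n))) :=
    mem_hull_image_of_forall_nonneg _ _ _ fun x hx =>
      h x (fun j => hx (.inr j) (Finset.mem_univ _)) fun i => hx (.inl i) (Finset.mem_univ _)
  rw [Finset.coe_univ, Set.image_univ, Submodule.mem_span_range_iff_exists_fun] at hc
  obtain ⟨a, ha⟩ := hc
  refine ⟨fun i => a (.inl i), fun i => (a (.inl i)).2, fun j => ?_⟩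
  have hcj : (Aᵀ *ᵥ fun i => (a (.inl i) : R)) j + a (.inr j) = c j := by
    have haj := LinearMap.congr_fun ha (Pi.single j 1)
    simpa [f, Fintype.sum_sum_type, LinearMap.sum_apply, ← Nonneg.coe_smul, Pi.single_apply,
      mulVec, dotProduct, mul_comm] using haj
  linarith [(a (.inr j)).2]

end Farkas

section Tucker

variable {R ι : Type*} [Field R] [LinearOrder R] [IsStrictOrderedRing R] [Fintype ι]
  {K : Matrix ι ι R}

theorem exists_pos_add_mulVec_apply_of_transpose_eq_neg (hK : Kᵀ = -K) (i : ι) :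
    ∃ z, 0 ≤ z ∧ 0 ≤ K *ᵥ z ∧ 0 < (z + K *ᵥ z) i := by
  classical
  by_cases! h : ∃ z, 0 ≤ z ∧ 0 ≤ K *ᵥ z ∧ 0 < z i
  · obtain ⟨z, hz, hKz, hzi⟩ := h
    exact ⟨z, hz, hKz, add_pos_of_pos_of_nonneg hzi (hKz i)⟩
  · obtain ⟨w, hw, hKw⟩ := exists_transpose_mulVec_le_of_forall_dotProduct_nonneg K
      (-Pi.single i 1) fun z hz hKz => by simpa using h z hz hKz
    rw [hK, neg_mulVec, neg_le_neg_iff] at hKw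
    refine ⟨w, hw, (Pi.single_nonneg.2 zero_le_one).trans hKw,
      add_pos_of_nonneg_of_pos (hw i) ?_⟩
    exact zero_lt_one.trans_le (by simpa using hKw i)

theorem exists_pos_add_mulVec_of_transpose_eq_neg (hK : Kᵀ = -K) :
    ∃ z, 0 ≤ z ∧ 0 ≤ K *ᵥ z ∧ ∀ i, 0 < (z + K *ᵥ z) i := by
  choose z hz hKz hpos using exists_pos_add_mulVec_apply_of_transpose_eq_neg hK
  refine ⟨∑ i, z i, Finset.sum_nonneg fun i _ => hz i, ?_, fun i => ?_⟩
  · rw [mulVec_sum]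
    exact Finset.sum_nonneg fun i _ => hKz i
  · rw [mulVec_sum, ← Finset.sum_add_distrib, Finset.sum_apply]
    exact Finset.sum_pos' (fun j _ => add_nonneg (hz j i) (hKz j i)) ⟨i, Finset.mem_univ i, hpos i⟩

theorem exists_pos_add_mulVec_apply_eq_one_of_transpose_eq_neg (hK : Kᵀ = -K) {k : ι}
    (hk : ∀ z, 0 ≤ z → 0 ≤ K *ᵥ z → 0 < (z + K *ᵥ z) k → z k ≠ 0) :
    ∃ z, 0 ≤ z ∧ 0 ≤ K *ᵥ z ∧ (∀ i, 0 < (z + K *ᵥ z) i) ∧ z k = 1 := by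
  obtain ⟨z, hz, hKz, hpos⟩ := exists_pos_add_mulVec_of_transpose_eq_neg hK
  have hzk : z k ≠ 0 := hk z hz hKz (hpos k)
  have hinv : 0 < (z k)⁻¹ := inv_pos.2 ((hz k).lt_of_ne' hzk)
  refine ⟨(z k)⁻¹ • z, smul_nonneg hinv.le hz, ?_, fun i => ?_, inv_mul_cancel₀ hzk⟩
  · rw [mulVec_smul]
    exact smul_nonneg hinv.le hKz
  · rw [mulVec_smul, ← smul_add]
    exact smul_pos hinv (hpos i)

end Tucker

section LinearProgramming

variable {R m n : Type*}

/-- The feasible set of the primal program `max {cᵀx : Ax ≤ b, x ≥ 0}`. -/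
def primalFeasible [NonUnitalNonAssocSemiring R] [LE R] [Fintype n] (A : Matrix m n R) (b : m → R) :
    Set (n → R) :=
  {x | A *ᵥ x ≤ b ∧ 0 ≤ x}

/-- The feasible set of the dual program `min {bᵀy : Aᵀy ≥ c, y ≥ 0}`. -/
def dualFeasible [NonUnitalNonAssocSemiring R] [LE R] [Fintype m] (A : Matrix m n R) (c : n → R) :
    Set (m → R) :=
  {y | c ≤ Aᵀ *ᵥ y ∧ 0 ≤ y}

section Duality

variable [CommSemiring R] [PartialOrder R] [IsOrderedRing R] [Fintype m] [Fintype n]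
  {A : Matrix m n R} {b : m → R} {c x : n → R} {y : m → R}

theorem dotProduct_le_dotProduct_of_feasible (hx : x ∈ primalFeasible A b)
    (hy : y ∈ dualFeasible A c) : c ⬝ᵥ x ≤ b ⬝ᵥ y :=
  calc
    c ⬝ᵥ x ≤ (Aᵀ *ᵥ y) ⬝ᵥ x := dotProduct_le_dotProduct_of_nonneg_right hy.1 hx.2
    _ = (A *ᵥ x) ⬝ᵥ y := by rw [mulVec_transpose, ← dotProduct_mulVec, dotProduct_comm]
    _ ≤ b ⬝ᵥ y := dotProduct_le_dotProduct_of_nonneg_right hx.1 hy.2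

theorem isMaxOn_primalFeasible_of_le (hy : y ∈ dualFeasible A c) (h : b ⬝ᵥ y ≤ c ⬝ᵥ x) :
    IsMaxOn (c ⬝ᵥ ·) (primalFeasible A b) x :=
  isMaxOn_iff.2 fun _ hx' => (dotProduct_le_dotProduct_of_feasible hx' hy).trans h

theorem isMinOn_dualFeasible_of_le (hx : x ∈ primalFeasible A b) (h : b ⬝ᵥ y ≤ c ⬝ᵥ x) :
    IsMinOn (b ⬝ᵥ ·) (dualFeasible A c) y :=
  isMinOn_iff.2 fun _ hy' => h.trans (dotProduct_le_dotProduct_of_feasible hx hy')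

theorem dotProduct_le_dotProduct_of_feasible_zero (hP : (primalFeasible A b).Nonempty)
    (hD : (dualFeasible A c).Nonempty) (hx : x ∈ primalFeasible A 0) (hy : y ∈ dualFeasible A 0) :
    c ⬝ᵥ x ≤ b ⬝ᵥ y := by
  obtain ⟨x₀, hx₀⟩ := hP
  obtain ⟨y₀, hy₀⟩ := hD
  calc
    c ⬝ᵥ x ≤ 0 ⬝ᵥ y₀ := dotProduct_le_dotProduct_of_feasible hx hy₀
    _ = 0 ⬝ᵥ x₀ := by simp only [zero_dotProduct]
    _ ≤ b ⬝ᵥ y := dotProduct_le_dotProduct_of_feasible hx₀ hy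

end Duality

/-- The skew-symmetric matrix of the Goldman–Tucker self-dual system, which homogenizes the
optimality conditions of the primal and the dual program. It acts on vectors `(y, x, t)`, where `t`
is the homogenizing variable. -/
def selfDualMatrix [Ring R] (A : Matrix m n R) (b : m → R) (c : n → R) :
    Matrix ((m ⊕ n) ⊕ Unit) ((m ⊕ n) ⊕ Unit) R :=
  fromBlocks (fromBlocks 0 (-A) Aᵀ 0) (replicateCol Unit (Sum.elim b (-c)))
    (-replicateRow Unit (Sum.elim b (-c))) 0

theorem transpose_selfDualMatrix [Ring R] (A : Matrix m n R) (b : m → R) (c : n → R) :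
    (selfDualMatrix A b c)ᵀ = -selfDualMatrix A b c := by
  simp [selfDualMatrix, fromBlocks_transpose, fromBlocks_neg]

theorem selfDualMatrix_mulVec [CommRing R] [Fintype m] [Fintype n] (A : Matrix m n R) (b : m → R)
    (c x : n → R) (y : m → R) (t : R) :
    selfDualMatrix A b c *ᵥ Sum.elim (Sum.elim y x) (fun _ => t) =
      Sum.elim (Sum.elim (t • b - A *ᵥ x) (Aᵀ *ᵥ y - t • c)) (fun _ => c ⬝ᵥ x - b ⬝ᵥ y) := by
  have hcol : (replicateCol Unit (Sum.elim b (-c)) *ᵥ fun _ => t) = t • Sum.elim b (-c) := by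
    ext i
    simp [mulVec_eq_sum]
  have hrow : replicateRow Unit (Sum.elim b (-c)) *ᵥ Sum.elim y x = fun _ => b ⬝ᵥ y - c ⬝ᵥ x := by
    rw [replicateRow_mulVec_eq_const, sumElim_dotProduct_sumElim, neg_dotProduct, ← sub_eq_add_neg]
    rfl
  simp only [selfDualMatrix, fromBlocks_mulVec, Sum.elim_comp_inl, Sum.elim_comp_inr, hcol, hrow,
    zero_mulVec, neg_mulVec, zero_add, add_zero]
  ext ((_ | _) | _)
  · simp [neg_add_eq_sub]
  · simp [← sub_eq_add_neg]
  · simp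

theorem exists_strictlyComplementary_of_forall_feasible_zero [Field R] [LinearOrder R]
    [IsStrictOrderedRing R] [Fintype m] [Fintype n] {A : Matrix m n R} {b : m → R} {c : n → R}
    (h : ∀ x ∈ primalFeasible A 0, ∀ y ∈ dualFeasible A 0, c ⬝ᵥ x ≤ b ⬝ᵥ y) :
    ∃ x ∈ primalFeasible A b, ∃ y ∈ dualFeasible A c, b ⬝ᵥ y ≤ c ⬝ᵥ x ∧
      (∀ j, 0 < (x + (Aᵀ *ᵥ y - c)) j) ∧ ∀ i, 0 < (y + (b - A *ᵥ x)) i := by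
  have hsplit (z : (m ⊕ n) ⊕ Unit → R) : ∃ x y t, z = Sum.elim (Sum.elim y x) fun _ => t :=
    ⟨z ∘ .inl ∘ .inr, z ∘ .inl ∘ .inl, z (.inr ()), by ext ((_ | _) | _) <;> rfl⟩
  obtain ⟨z, hz, hKz, hpos, hz₁⟩ := exists_pos_add_mulVec_apply_eq_one_of_transpose_eq_neg
    (transpose_selfDualMatrix A b c) (k := .inr ()) fun z hz hKz hpos hz₀ => by
      obtain ⟨x, y, t, rfl⟩ := hsplit z
      obtain rfl : t = 0 := hz₀
      simp only [selfDualMatrix_mulVec, zero_smul, zero_sub, sub_zero] at hKz hpos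
      have hxy : c ⬝ᵥ x ≤ b ⬝ᵥ y :=
        h x ⟨fun i => neg_nonneg.1 (hKz (.inl (.inl i))), fun j => hz (.inl (.inr j))⟩
          y ⟨fun j => hKz (.inl (.inr j)), fun i => hz (.inl (.inl i))⟩
      have hgap : 0 < 0 + (c ⬝ᵥ x - b ⬝ᵥ y) := hpos
      linarith
  obtain ⟨x, y, t, rfl⟩ := hsplit z
  obtain rfl : t = 1 := hz₁
  simp only [selfDualMatrix_mulVec, one_smul] at hKz hpos
  exact ⟨x, ⟨fun i => sub_nonneg.1 (hKz (.inl (.inl i))), fun j => hz (.inl (.inr j))⟩,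
    y, ⟨fun j => sub_nonneg.1 (hKz (.inl (.inr j))), fun i => hz (.inl (.inl i))⟩,
    sub_nonneg.1 (hKz (.inr ())), fun j => hpos (.inl (.inr j)), fun i => hpos (.inl (.inl i))⟩

end LinearProgramming

theorem goldman_tucker_general {R m n : Type*} [Field R] [LinearOrder R] [IsStrictOrderedRing R]
    [Fintype m] [Fintype n] {A : Matrix m n R} {b : m → R} {c : n → R}
    (hP : (primalFeasible A b).Nonempty) (hD : (dualFeasible A c).Nonempty) :
    ∃ x ∈ primalFeasible A b, ∃ y ∈ dualFeasible A c,
      IsMaxOn (c ⬝ᵥ ·) (primalFeasible A b) x ∧ IsMinOn (b ⬝ᵥ ·) (dualFeasible A c) y ∧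
      (∀ j, 0 < (x + (Aᵀ *ᵥ y - c)) j) ∧ ∀ i, 0 < (y + (b - A *ᵥ x)) i := by
  obtain ⟨x, hx, y, hy, hgap, hxv, hyu⟩ :=
    exists_strictlyComplementary_of_forall_feasible_zero fun _ hx _ hy =>
      dotProduct_le_dotProduct_of_feasible_zero hP hD hx hy
  exact ⟨x, hx, y, hy, isMaxOn_primalFeasible_of_le hy hgap, isMinOn_dualFeasible_of_le hx hgap,
    hxv, hyu⟩

/-- Goldman–Tucker theorem: if the primal `max {cᵀx : Ax ≤ b, x ≥ 0}` and the dual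
`min {bᵀy : Aᵀy ≥ c, y ≥ 0}` both have optimal solutions, then there exist optimal
solutions `x*, y*` whose slacks `u* = b − Ax*`, `v* = Aᵀy* − c` satisfy `x* + v* > 0`
and `y* + u* > 0` componentwise. -/
theorem goldman_tucker (m n : ℕ)
    (A : Matrix (Fin m) (Fin n) ℝ) (b : Fin m → ℝ) (c : Fin n → ℝ)
    (hP : ∃ x : Fin n → ℝ,
      ((∀ i, A.mulVec x i ≤ b i) ∧ (∀ j, 0 ≤ x j)) ∧
        ∀ x' : Fin n → ℝ, (∀ i, A.mulVec x' i ≤ b i) → (∀ j, 0 ≤ x' j) →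
          c ⬝ᵥ x' ≤ c ⬝ᵥ x)
    (hD : ∃ y : Fin m → ℝ,
      ((∀ j, c j ≤ Aᵀ.mulVec y j) ∧ (∀ i, 0 ≤ y i)) ∧
        ∀ y' : Fin m → ℝ, (∀ j, c j ≤ Aᵀ.mulVec y' j) → (∀ i, 0 ≤ y' i) →
          b ⬝ᵥ y ≤ b ⬝ᵥ y') :
    ∃ xs : Fin n → ℝ, ∃ ys : Fin m → ℝ,
      ((∀ i, A.mulVec xs i ≤ b i) ∧ (∀ j, 0 ≤ xs j) ∧
        ∀ x' : Fin n → ℝ, (∀ i, A.mulVec x' i ≤ b i) → (∀ j, 0 ≤ x' j) →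
          c ⬝ᵥ x' ≤ c ⬝ᵥ xs) ∧
      ((∀ j, c j ≤ Aᵀ.mulVec ys j) ∧ (∀ i, 0 ≤ ys i) ∧
        ∀ y' : Fin m → ℝ, (∀ j, c j ≤ Aᵀ.mulVec y' j) → (∀ i, 0 ≤ y' i) →
          b ⬝ᵥ ys ≤ b ⬝ᵥ y') ∧
      (∀ j, 0 < xs j + (Aᵀ.mulVec ys - c) j) ∧
      (∀ i, 0 < ys i + (b - A.mulVec xs) i) := by
  obtain ⟨x, hx, y, hy, hmax, hmin, hxv, hyu⟩ := goldman_tucker_general (A := A) (b := b) (c := c)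
    (hP.imp fun _ h => h.1) (hD.imp fun _ h => h.1)
  exact ⟨x, y, ⟨hx.1, hx.2, fun _ h₁ h₂ => hmax ⟨h₁, h₂⟩⟩,
    ⟨hy.1, hy.2, fun _ h₁ h₂ => hmin ⟨h₁, h₂⟩⟩, hxv, hyu⟩
end
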